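/- Let c > 0 and let a : (−c²/2, c²/3) → (0, c) be differentiable with ∫₀^{a(ξ)} (ξ + (c² − a(ξ)²)/2 − s²)·√((a(ξ)² − s²)/(c² − s²)) ds = 0 for every ξ in the interval, and set m(ξ) = a(ξ)/c. Define B(ξ) = 24·∫_{a(ξ)}^{c} (ξ + (c² − a(ξ)²)/2 − s²)·√((s² − a(ξ)²)/(c² − s²)) ds. Then for every ξ ∈ (−c²/2, c²/3), B′(ξ) = 12πc / K(m(ξ)), where K(m) = ∫₀¹ ((1 − t²)(1 − m²t²))^{−1/2} dt. -/

import Mathlib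

open Real Set Filter Topology MeasureTheory intervalIntegral

noncomputable def KK (c x : ℝ) : ℝ := ∫ θ in (0:ℝ)..(π/2), (√(c^2 - x * sin θ ^ 2))⁻¹
noncomputable def EE (c x : ℝ) : ℝ := ∫ θ in (0:ℝ)..(π/2), √(c^2 - x * sin θ ^ 2)

lemma D_ge {c x : ℝ} (hx0 : 0 ≤ x) (θ : ℝ) : c^2 - x ≤ c^2 - x * sin θ ^ 2 := by
  nlinarith [sin_sq_le_one θ]

lemma D_pos {c x : ℝ} (hx0 : 0 ≤ x) (hx : x < c^2) (θ : ℝ) : 0 < c^2 - x * sin θ ^ 2 := by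
  have := D_ge (c := c) hx0 θ
  linarith

lemma r_pos {c x : ℝ} (hx0 : 0 ≤ x) (hx : x < c^2) (θ : ℝ) : 0 < √(c^2 - x * sin θ ^ 2) :=
  Real.sqrt_pos.2 (D_pos hx0 hx θ)

lemma cont_r (c x : ℝ) : Continuous (fun θ : ℝ => √(c^2 - x * sin θ ^ 2)) := by fun_prop

lemma cont_ri {c x : ℝ} (hx0 : 0 ≤ x) (hx : x < c^2) :
    Continuous (fun θ : ℝ => (√(c^2 - x * sin θ ^ 2))⁻¹) :=
  (cont_r c x).inv₀ (fun θ => (r_pos hx0 hx θ).ne')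

/-- x∫ sin²/Δ = c²K - E -/
lemma int_S {c x : ℝ} (hx0 : 0 ≤ x) (hx : x < c^2) :
    ∫ θ in (0:ℝ)..(π/2), x * sin θ ^ 2 * (√(c^2 - x * sin θ ^ 2))⁻¹ = c^2 * KK c x - EE c x := by
  unfold KK EE
  have hc1 := cont_ri hx0 hx
  have hc2 := cont_r c x
  rw [← intervalIntegral.integral_const_mul, ← intervalIntegral.integral_sub
    (Continuous.intervalIntegrable (by fun_prop) _ _)
    (Continuous.intervalIntegrable (by fun_prop) _ _)]
  refine intervalIntegral.integral_congr fun θ _ => ?_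
  have h := r_pos hx0 hx θ
  have h2 := Real.sq_sqrt (D_pos hx0 hx θ).le
  field_simp
  linarith

lemma hasDeriv_E {c x : ℝ} (hx0 : 0 < x) (hx : x < c^2) :
    HasDerivAt (EE c) (-(c^2 * KK c x - EE c x)/(2*x)) x := by
  set s := Ioo 0 ((c^2+x)/2) with hs
  have hsx : s ∈ 𝓝 x := Ioo_mem_nhds hx0 (by linarith)
  have key : ∀ y ∈ s, 0 ≤ y ∧ y < c^2 := fun y hy => ⟨hy.1.le, by have := hy.2; linarith⟩
  have := (intervalIntegral.hasDerivAt_integral_of_dominated_loc_of_deriv_le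
    (μ := volume) (a := 0) (b := π/2)
    (F := fun x θ => √(c^2 - x * sin θ ^ 2))
    (F' := fun x θ => - sin θ ^ 2 * (√(c^2 - x * sin θ ^ 2))⁻¹ / 2)
    (bound := fun _ => (√((c^2 - x)/2))⁻¹ / 2) hsx
    (Eventually.of_forall fun y => (cont_r c y).aestronglyMeasurable)
    ((cont_r c x).intervalIntegrable _ _)
    (by
      have := cont_ri hx0.le hx
      exact (Continuous.aestronglyMeasurable (by fun_prop)))
    (ae_of_all _ fun θ _ y hy => ?_)
    (by simp)
    (ae_of_all _ fun θ _ y hy => ?_)).2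
  · refine HasDerivAt.congr_deriv (this) ?_; symm
    rw [← int_S hx0.le hx, neg_div, div_eq_mul_inv, mul_comm, ← intervalIntegral.integral_const_mul,
      ← intervalIntegral.integral_neg]
    refine intervalIntegral.integral_congr fun θ _ => ?_
    field_simp
  · obtain ⟨h0, h1⟩ := key y hy
    have hp := r_pos h0 h1 θ
    have hle : (√(c^2 - y * sin θ ^ 2))⁻¹ ≤ (√((c^2 - x)/2))⁻¹ := by
      apply inv_anti₀ (Real.sqrt_pos.2 (by linarith))
      apply Real.sqrt_le_sqrt
      have := D_ge (c := c) h0 θ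
      have := hy.2
      linarith
    have hi : 0 < (√(c^2 - y * sin θ ^ 2))⁻¹ := by positivity
    rw [Real.norm_eq_abs, abs_div, abs_mul, abs_neg, abs_of_pos hi, abs_of_nonneg (sq_nonneg _), abs_two]
    have := sin_sq_le_one θ
    have := sq_nonneg (sin θ)
    gcongr
    nlinarith
  · obtain ⟨h0, h1⟩ := key y hy
    have hD := D_pos h0 h1 θ
    have : HasDerivAt (fun y => c^2 - y * sin θ ^ 2) (-(1 * sin θ ^ 2)) y :=
      ((hasDerivAt_id y).mul_const _).const_sub _
    refine HasDerivAt.congr_deriv (this.sqrt hD.ne') ?_; symm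
    field_simp

lemma int_S3 {c x : ℝ} (hx0 : 0 ≤ x) (hx : x < c^2) :
    x * (c^2 - x) * ∫ θ in (0:ℝ)..(π/2), sin θ ^ 2 * (√(c^2 - x * sin θ ^ 2))⁻¹ ^ 3
      = EE c x - (c^2 - x) * KK c x := by
  have hc1 := cont_ri hx0 hx
  have hc2 := cont_r c x
  have h0 : ∫ θ in (0:ℝ)..(π/2), (√(c^2 - x * sin θ ^ 2) - (c^2-x) * (√(c^2 - x * sin θ ^ 2))⁻¹
      - x * (c^2 - x) * (sin θ ^ 2 * (√(c^2 - x * sin θ ^ 2))⁻¹ ^ 3)) = 0 := by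
    rw [intervalIntegral.integral_eq_sub_of_hasDerivAt
      (f := fun θ => x * (sin θ * cos θ) * (√(c^2 - x * sin θ ^ 2))⁻¹)]
    · simp
    · intro θ _
      have hD := D_pos hx0 hx θ
      have hr := r_pos hx0 hx θ
      have h2 := Real.sq_sqrt hD.le
      have e1 : HasDerivAt (fun θ => c^2 - x * sin θ ^ 2) (-(x * (2 * sin θ * cos θ))) θ := by
        have := (((hasDerivAt_sin θ).pow 2).const_mul x).const_sub (c^2)
        refine HasDerivAt.congr_deriv (this) ?_; symm
        simp
      have e2 := (((hasDerivAt_sin θ).mul (hasDerivAt_cos θ)).const_mul x).mul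
        ((e1.sqrt hD.ne').inv hr.ne')
      refine HasDerivAt.congr_deriv (e2) ?_; symm
      simp only [Pi.mul_apply, Pi.inv_apply]
      set r := √(c^2 - x * sin θ ^ 2)
      have h4 : r^4 = (c^2 - x * sin θ ^ 2)^2 := by rw [← h2]; ring
      have h5 : cos θ ^ 2 = 1 - sin θ ^ 2 := by rw [cos_sq']
      field_simp
      ring_nf
      simp only [h4, h2, h5]
      ring
    · exact Continuous.intervalIntegrable (by fun_prop) _ _
  rw [intervalIntegral.integral_sub, intervalIntegral.integral_sub,
    intervalIntegral.integral_const_mul, intervalIntegral.integral_const_mul] at h0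
  · unfold EE KK; linarith
  all_goals exact Continuous.intervalIntegrable (by fun_prop) _ _

lemma hasDeriv_K {c x : ℝ} (hx0 : 0 < x) (hx : x < c^2) :
    HasDerivAt (KK c) ((EE c x / (c^2 - x) - KK c x)/(2*x)) x := by
  set s := Ioo 0 ((c^2+x)/2) with hs
  have hsx : s ∈ 𝓝 x := Ioo_mem_nhds hx0 (by linarith)
  have key : ∀ y ∈ s, 0 ≤ y ∧ y < c^2 := fun y hy => ⟨hy.1.le, by have := hy.2; linarith⟩
  have := (intervalIntegral.hasDerivAt_integral_of_dominated_loc_of_deriv_le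
    (μ := volume) (a := 0) (b := π/2)
    (F := fun x θ => (√(c^2 - x * sin θ ^ 2))⁻¹)
    (F' := fun x θ => sin θ ^ 2 * (√(c^2 - x * sin θ ^ 2))⁻¹ ^ 3 / 2)
    (bound := fun _ => (√((c^2 - x)/2))⁻¹ ^ 3 / 2) hsx
    (by
      filter_upwards [hsx] with y hy
      exact (cont_ri (key y hy).1 (key y hy).2).aestronglyMeasurable)
    ((cont_ri hx0.le hx).intervalIntegrable _ _)
    (by
      have := cont_ri hx0.le hx
      exact (Continuous.aestronglyMeasurable (by fun_prop)))
    (ae_of_all _ fun θ _ y hy => ?_)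
    (by simp)
    (ae_of_all _ fun θ _ y hy => ?_)).2
  · refine HasDerivAt.congr_deriv (this) ?_; symm
    have h3 := int_S3 hx0.le hx
    have : c^2 - x ≠ 0 := by linarith
    rw [intervalIntegral.integral_div]
    generalize (∫ θ in (0:ℝ)..(π/2), sin θ ^ 2 * (√(c^2 - x * sin θ ^ 2))⁻¹ ^ 3) = Q at *
    field_simp
    linarith
  · obtain ⟨h0, h1⟩ := key y hy
    have hp := r_pos h0 h1 θ
    have hle : (√(c^2 - y * sin θ ^ 2))⁻¹ ≤ (√((c^2 - x)/2))⁻¹ := by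
      apply inv_anti₀ (Real.sqrt_pos.2 (by linarith))
      apply Real.sqrt_le_sqrt
      have := D_ge (c := c) h0 θ
      have := hy.2
      linarith
    have hi : 0 < (√(c^2 - y * sin θ ^ 2))⁻¹ := by positivity
    rw [Real.norm_eq_abs, abs_of_nonneg (by positivity)]
    have h6 := sin_sq_le_one θ
    have := sq_nonneg (sin θ)
    have h7 : (√(c^2 - y * sin θ ^ 2))⁻¹ ^ 3 ≤ (√((c^2 - x)/2))⁻¹ ^ 3 := by gcongr
    have h8 : 0 < (√(c^2 - y * sin θ ^ 2))⁻¹ ^ 3 := by positivity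
    gcongr
    nlinarith
  · obtain ⟨h0, h1⟩ := key y hy
    have hD := D_pos h0 h1 θ
    have hr := r_pos h0 h1 θ
    have : HasDerivAt (fun y => c^2 - y * sin θ ^ 2) (-(1 * sin θ ^ 2)) y :=
      ((hasDerivAt_id y).mul_const _).const_sub _
    refine HasDerivAt.congr_deriv ((this.sqrt hD.ne').inv hr.ne') ?_; symm
    field_simp

/-- J1 reduction -/
lemma int_J1 {c x : ℝ} (hx0 : 0 ≤ x) (hx : x < c^2) :
    ∫ θ in (0:ℝ)..(π/2), x^2 * sin θ ^ 2 * cos θ ^ 2 * (√(c^2 - x * sin θ ^ 2))⁻¹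
      = ((2*x*c^2 - 2*c^4) * KK c x + (2*c^2 - x) * EE c x)/3 := by
  have hc1 := cont_ri hx0 hx
  have hc2 := cont_r c x
  have h0 : ∫ θ in (0:ℝ)..(π/2), ((x*c^2) * (√(c^2 - x * sin θ ^ 2))⁻¹
      + (x - 2*c^2) * (x * sin θ ^ 2 * (√(c^2 - x * sin θ ^ 2))⁻¹)
      - 3 * (x^2 * sin θ ^ 2 * cos θ ^ 2 * (√(c^2 - x * sin θ ^ 2))⁻¹)) = 0 := by
    rw [intervalIntegral.integral_eq_sub_of_hasDerivAt
      (f := fun θ => x * (sin θ * cos θ) * √(c^2 - x * sin θ ^ 2))]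
    · simp
    · intro θ _
      have hD := D_pos hx0 hx θ
      have hr := r_pos hx0 hx θ
      have h2 := Real.sq_sqrt hD.le
      have e1 : HasDerivAt (fun θ => c^2 - x * sin θ ^ 2) (-(x * (2 * sin θ * cos θ))) θ := by
        have := (((hasDerivAt_sin θ).pow 2).const_mul x).const_sub (c^2)
        refine HasDerivAt.congr_deriv (this) ?_; symm
        simp
      have e2 := (((hasDerivAt_sin θ).mul (hasDerivAt_cos θ)).const_mul x).mul
        (e1.sqrt hD.ne')
      refine HasDerivAt.congr_deriv (e2) ?_; symm
      simp only [Pi.mul_apply, Pi.inv_apply]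
      set r := √(c^2 - x * sin θ ^ 2)
      have h5 : cos θ ^ 2 = 1 - sin θ ^ 2 := by rw [cos_sq']
      field_simp
      ring_nf
      simp only [h2, h5]
      ring
    · exact Continuous.intervalIntegrable (by fun_prop) _ _
  rw [intervalIntegral.integral_sub, intervalIntegral.integral_add,
    intervalIntegral.integral_const_mul, intervalIntegral.integral_const_mul,
    intervalIntegral.integral_const_mul, int_S hx0 hx] at h0
  · unfold EE KK at *; linarith
  all_goals exact Continuous.intervalIntegrable (by fun_prop) _ _

lemma int_J0 {c x : ℝ} (hx0 : 0 ≤ x) (hx : x < c^2) :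
    ∫ θ in (0:ℝ)..(π/2), x * cos θ ^ 2 * (√(c^2 - x * sin θ ^ 2))⁻¹
      = (x - c^2) * KK c x + EE c x := by
  have hc1 := cont_ri hx0 hx
  have h := int_S hx0 hx
  have : ∫ θ in (0:ℝ)..(π/2), x * cos θ ^ 2 * (√(c^2 - x * sin θ ^ 2))⁻¹
     = ∫ θ in (0:ℝ)..(π/2), (x * (√(c^2 - x * sin θ ^ 2))⁻¹
        - x * sin θ ^ 2 * (√(c^2 - x * sin θ ^ 2))⁻¹) := by
    refine intervalIntegral.integral_congr fun θ _ => ?_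
    simp only [cos_sq']
    ring
  rw [this, intervalIntegral.integral_sub, h, intervalIntegral.integral_const_mul]
  · unfold EE KK at *; linarith
  all_goals exact Continuous.intervalIntegrable (by fun_prop) _ _

lemma int_I {c x : ℝ} (hx0 : 0 ≤ x) (hx : x < c^2) (p : ℝ) :
    ∫ θ in (0:ℝ)..(π/2), (p - x * sin θ ^ 2) * (x * cos θ ^ 2) * (√(c^2 - x * sin θ ^ 2))⁻¹
      = p * ((x - c^2) * KK c x + EE c x) -
        ((2*x*c^2 - 2*c^4) * KK c x + (2*c^2 - x) * EE c x)/3 := by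
  have hc1 := cont_ri hx0 hx
  rw [← int_J0 hx0 hx, ← int_J1 hx0 hx, ← intervalIntegral.integral_const_mul,
    ← intervalIntegral.integral_sub]
  · refine intervalIntegral.integral_congr fun θ _ => ?_
    ring
  all_goals exact Continuous.intervalIntegrable (by fun_prop) _ _

lemma K_le {c x : ℝ} (hx0 : 0 ≤ x) (hx : x < c^2) : KK c x ≤ π/2 * (√(c^2 - x))⁻¹ := by
  have h : KK c x ≤ ∫ θ in (0:ℝ)..(π/2), (√(c^2 - x))⁻¹ := by
    refine intervalIntegral.integral_mono_on (by positivity)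
      ((cont_ri hx0 hx).intervalIntegrable _ _) (by simp) fun θ _ => ?_
    apply inv_anti₀ (Real.sqrt_pos.2 (by linarith))
    exact Real.sqrt_le_sqrt (D_ge hx0 θ)
  simpa using h

lemma K_ge {c x : ℝ} (hc : 0 < c) (hx0 : 0 ≤ x) (hx : x < c^2) : π/2 * c⁻¹ ≤ KK c x := by
  have h : ∫ θ in (0:ℝ)..(π/2), c⁻¹ ≤ KK c x := by
    refine intervalIntegral.integral_mono_on (by positivity) (by simp)
      ((cont_ri hx0 hx).intervalIntegrable _ _) fun θ _ => ?_
    apply inv_anti₀ (r_pos hx0 hx θ)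
    rw [Real.sqrt_le_left hc.le]
    nlinarith [sq_nonneg (sin θ)]
  simpa using h

lemma K_pos {c x : ℝ} (hc : 0 < c) (hx0 : 0 ≤ x) (hx : x < c^2) : 0 < KK c x :=
  lt_of_lt_of_le (by positivity) (K_ge hc hx0 hx)

lemma S_nonneg {c x : ℝ} (hx0 : 0 ≤ x) (hx : x < c^2) : 0 ≤ c^2 * KK c x - EE c x := by
  rw [← int_S hx0 hx]
  apply intervalIntegral.integral_nonneg (by positivity)
  intro θ _
  have := r_pos hx0 hx θ
  positivity

lemma S_le {c x : ℝ} (hx0 : 0 ≤ x) (hx : x < c^2) : c^2 * KK c x - EE c x ≤ x * KK c x := by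
  have hc1 := cont_ri hx0 hx
  rw [← int_S hx0 hx, KK, ← intervalIntegral.integral_const_mul]
  refine intervalIntegral.integral_mono_on (by positivity)
    (Continuous.intervalIntegrable (by fun_prop) _ _)
    (Continuous.intervalIntegrable (by fun_prop) _ _) fun θ _ => ?_
  have := inv_pos.2 (r_pos hx0 hx θ)
  have h2 := sin_sq_le_one θ
  gcongr
  nlinarith

lemma E_cont (c : ℝ) : Continuous (EE c) := by
  unfold EE
  apply intervalIntegral.continuous_parametric_intervalIntegral_of_continuous'
  fun_prop

lemma E_end {c : ℝ} (hc : 0 < c) : EE c (c^2) = c := by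
  have : EE c (c^2) = ∫ θ in (0:ℝ)..(π/2), c * cos θ := by
    refine intervalIntegral.integral_congr fun θ hθ => ?_
    rw [uIcc_of_le (by positivity)] at hθ
    have hcos := cos_nonneg_of_mem_Icc ⟨by linarith [hθ.1, pi_pos], hθ.2⟩
    beta_reduce
    rw [← Real.sqrt_sq (mul_nonneg hc.le hcos)]
    congr 1
    rw [mul_pow, cos_sq']; ring
  rw [this]
  simp

lemma K_tendsto {c : ℝ} (hc : 0 < c) : Tendsto (KK c) (𝓝[>] 0) (𝓝 (π/2 * c⁻¹)) := by
  have hm : Ioo (0:ℝ) (c^2) ∈ 𝓝[>] (0:ℝ) := Ioo_mem_nhdsGT (by positivity)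
  have h1 : Tendsto (fun x => π/2 * (√(c^2 - x))⁻¹) (𝓝[>] 0) (𝓝 (π/2 * c⁻¹)) := by
    have : ContinuousAt (fun x => π/2 * (√(c^2 - x))⁻¹) 0 := by
      apply ContinuousAt.mul continuousAt_const
      apply ContinuousAt.inv₀ (by fun_prop)
      simp [hc.ne', Real.sqrt_sq hc.le]
    have h := this.tendsto
    simp only [sub_zero, Real.sqrt_sq hc.le] at h
    exact h.mono_left nhdsWithin_le_nhds
  refine tendsto_of_tendsto_of_tendsto_of_le_of_le' tendsto_const_nhds h1 ?_ ?_
  · filter_upwards [hm] with x hx using K_ge hc hx.1.le hx.2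
  · filter_upwards [hm] with x hx using K_le hx.1.le hx.2

noncomputable def WW (c x : ℝ) : ℝ :=
  EE c x * KK c (c^2 - x) + EE c (c^2 - x) * KK c x - c^2 * KK c x * KK c (c^2 - x)

lemma W_deriv {c x : ℝ} (hx0 : 0 < x) (hx : x < c^2) : HasDerivAt (WW c) 0 x := by
  have hid : HasDerivAt (fun x : ℝ => c^2 - x) (-1) x := (hasDerivAt_id x).const_sub _
  have e1 := hasDeriv_E hx0 hx
  have k1 := hasDeriv_K hx0 hx
  have e2 := (hasDeriv_E (c := c) (x := c^2 - x) (by linarith) (by linarith)).comp x hid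
  have k2 := (hasDeriv_K (c := c) (x := c^2 - x) (by linarith) (by linarith)).comp x hid
  have := ((e1.mul k2).add (e2.mul k1)).sub ((k1.const_mul (c^2)).mul k2)
  refine HasDerivAt.congr_deriv this ?_
  simp only [Function.comp]
  have : c^2 - x ≠ 0 := by linarith
  have h3 : c^2 - (c^2 - x) = x := by ring
  rw [h3]
  field_simp
  ring

lemma legendre {c x : ℝ} (hc : 0 < c) (hx0 : 0 < x) (hx : x < c^2) : WW c x = π / 2 := by
  obtain ⟨w, hw⟩ := isOpen_Ioo.exists_is_const_of_deriv_eq_zero (s := Ioo 0 (c^2)) (f := WW c)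
    isPreconnected_Ioo
    (fun y hy => (W_deriv hy.1 hy.2).differentiableAt.differentiableWithinAt)
    (fun y hy => (W_deriv hy.1 hy.2).deriv)
  have hm : Ioo (0:ℝ) (c^2) ∈ 𝓝[>] (0:ℝ) := Ioo_mem_nhdsGT (by positivity)
  have t1 : Tendsto (WW c) (𝓝[>] 0) (𝓝 w) := by
    refine tendsto_const_nhds.congr' ?_
    filter_upwards [hm] with y hy using (hw y hy).symm
  have hK := K_tendsto hc
  have hE : Tendsto (fun y => EE c (c^2 - y)) (𝓝[>] 0) (𝓝 c) := by
    have : Continuous (fun y => EE c (c^2 - y)) := (E_cont c).comp (by fun_prop)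
    have h := this.tendsto 0
    simp only [sub_zero, E_end hc] at h
    exact h.mono_left nhdsWithin_le_nhds
  have hz : Tendsto (fun y => (c^2 * KK c y - EE c y) * KK c (c^2 - y)) (𝓝[>] 0) (𝓝 0) := by
    have hs : Tendsto (fun y : ℝ => KK c y * (π/2 * √y)) (𝓝[>] 0) (𝓝 (π/2 * c⁻¹ * (π/2 * √0))) := by
      apply hK.mul
      have : Continuous (fun y : ℝ => π/2 * √y) := by fun_prop
      exact (this.tendsto 0).mono_left nhdsWithin_le_nhds
    simp only [Real.sqrt_zero, mul_zero] at hs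
    refine tendsto_of_tendsto_of_tendsto_of_le_of_le' tendsto_const_nhds hs ?_ ?_
    · filter_upwards [hm] with y hy
      exact mul_nonneg (S_nonneg hy.1.le hy.2)
        (K_pos hc (by linarith [hy.2]) (by linarith [hy.1])).le
    · filter_upwards [hm] with y hy
      have a1 := S_le hy.1.le hy.2
      have a2 := K_le (c := c) (x := c^2 - y) (by linarith [hy.2]) (by linarith [hy.1])
      rw [sub_sub_cancel] at a2
      have a3 := K_pos hc hy.1.le hy.2
      have a4 := K_pos (c := c) (x := c^2 - y) hc (by linarith [hy.2]) (by linarith [hy.1])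
      have hy0 := hy.1
      calc _ ≤ (y * KK c y) * (π/2 * (√y)⁻¹) := by
            apply mul_le_mul a1 a2 a4.le (by positivity)
        _ = KK c y * (π/2 * √y) := by
            have : 0 < √y := Real.sqrt_pos.2 hy0
            have := Real.sq_sqrt hy0.le
            field_simp
            rw [this]
  have t2 : Tendsto (WW c) (𝓝[>] 0) (𝓝 (c * (π/2 * c⁻¹) - 0)) := by
    refine ((hE.mul hK).sub hz).congr fun y => ?_
    unfold WW; ring
  have := tendsto_nhds_unique t1 t2
  rw [hw x ⟨hx0, hx⟩, this]
  field_simp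
  ring

lemma sub1 {c a : ℝ} (ha : 0 < a) (hac : a < c) (p : ℝ) :
    ∫ s in (0:ℝ)..a, (p - s^2) * √((a^2 - s^2)/(c^2 - s^2)) =
     ∫ θ in (0:ℝ)..(π/2), (p - a^2 * sin θ ^ 2) * (a^2 * cos θ ^ 2) * (√(c^2 - a^2 * sin θ ^ 2))⁻¹ := by
  have := intervalIntegral.integral_comp_mul_deriv_of_deriv_nonneg (a := 0) (b := π/2)
    (f := fun θ => a * sin θ) (f' := fun θ => a * cos θ)
    (g := fun s => (p - s^2) * √((a^2 - s^2)/(c^2 - s^2)))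
    (by fun_prop) (fun θ _ => (hasDerivAt_sin θ).const_mul a)
    (fun θ hθ => by
      rw [min_eq_left (by positivity), max_eq_right (by positivity)] at hθ
      have := cos_nonneg_of_mem_Icc ⟨by linarith [hθ.1, pi_pos], hθ.2.le⟩
      positivity)
  simp only [sin_zero, mul_zero, sin_pi_div_two, mul_one] at this
  rw [← this]
  refine intervalIntegral.integral_congr_Ioo_of_le (by positivity) fun θ hθ => ?_
  have hcos := cos_nonneg_of_mem_Icc ⟨by linarith [hθ.1, pi_pos], hθ.2.le⟩
  have hr := r_pos (c := c) (sq_nonneg a) (by nlinarith) θ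
  simp only [Function.comp]
  have e : a^2 - (a * sin θ)^2 = (a * cos θ)^2 := by rw [mul_pow, mul_pow, cos_sq']; ring
  rw [e, Real.sqrt_div (sq_nonneg _), Real.sqrt_sq (by positivity), mul_pow]
  field_simp

lemma sub3 {c a : ℝ} (ha : 0 < a) (hac : a < c) :
    ∫ t in (0:ℝ)..1, (√((1 - t ^ 2) * (1 - (a / c) ^ 2 * t ^ 2)))⁻¹ = c * KK c (a^2) := by
  have hc : 0 < c := ha.trans hac
  have := intervalIntegral.integral_comp_mul_deriv_of_deriv_nonneg (a := 0) (b := π/2)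
    (f := fun θ => sin θ) (f' := fun θ => cos θ)
    (g := fun t => (√((1 - t ^ 2) * (1 - (a / c) ^ 2 * t ^ 2)))⁻¹)
    (by fun_prop) (fun θ _ => hasDerivAt_sin θ)
    (fun θ hθ => by
      rw [min_eq_left (by positivity), max_eq_right (by positivity)] at hθ
      exact cos_nonneg_of_mem_Icc ⟨by linarith [hθ.1, pi_pos], hθ.2.le⟩)
  simp only [sin_zero, sin_pi_div_two] at this
  rw [← this, KK, ← intervalIntegral.integral_const_mul]
  refine intervalIntegral.integral_congr_Ioo_of_le (by positivity) fun θ hθ => ?_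
  have hcos := cos_pos_of_mem_Ioo ⟨by linarith [hθ.1, pi_pos], hθ.2⟩
  have hr := r_pos (c := c) (sq_nonneg a) (by nlinarith) θ
  simp only [Function.comp]
  have e : (1 - sin θ ^2) * (1 - (a / c) ^ 2 * sin θ ^ 2)
      = (cos θ / c)^2 * (c^2 - a^2 * sin θ ^ 2) := by
    rw [← cos_sq']; field_simp
  rw [e, Real.sqrt_mul (sq_nonneg _), Real.sqrt_sq (by positivity)]
  field_simp

lemma sub2 {c a : ℝ} (ha : 0 < a) (hac : a < c) (p : ℝ) :
    ∫ s in a..c, (p - s^2) * √((s^2 - a^2)/(c^2 - s^2)) =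
     -∫ θ in (0:ℝ)..(π/2), ((c^2 - p) - (c^2 - a^2) * sin θ ^ 2) * ((c^2 - a^2) * cos θ ^ 2)
        * (√(c^2 - (c^2 - a^2) * sin θ ^ 2))⁻¹ := by
  have hc : 0 < c := ha.trans hac
  have hb0 : 0 < c^2 - a^2 := by nlinarith
  have hbc : c^2 - a^2 < c^2 := by nlinarith
  have := intervalIntegral.integral_comp_mul_deriv_of_deriv_nonpos (a := 0) (b := π/2)
    (f := fun θ => √(c^2 - (c^2 - a^2) * sin θ ^ 2))
    (f' := fun θ => -((c^2 - a^2) * (sin θ * cos θ)) * (√(c^2 - (c^2 - a^2) * sin θ ^ 2))⁻¹)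
    (g := fun s => (p - s^2) * √((s^2 - a^2)/(c^2 - s^2)))
    (by fun_prop)
    (fun θ _ => by
      have e1 : HasDerivAt (fun θ => c^2 - (c^2 - a^2) * sin θ ^ 2)
          (-((c^2 - a^2) * (2 * sin θ * cos θ))) θ := by
        have := (((hasDerivAt_sin θ).pow 2).const_mul (c^2 - a^2)).const_sub (c^2)
        refine HasDerivAt.congr_deriv this ?_
        simp
      refine HasDerivAt.congr_deriv (e1.sqrt (D_pos hb0.le hbc θ).ne') ?_
      have hr := r_pos hb0.le hbc θ
      field_simp)
    (fun θ hθ => by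
      rw [min_eq_left (by positivity), max_eq_right (by positivity)] at hθ
      have h1 := cos_nonneg_of_mem_Icc ⟨by linarith [hθ.1, pi_pos], hθ.2.le⟩
      have h2 := sin_nonneg_of_mem_Icc ⟨hθ.1.le, by linarith [hθ.2, pi_pos]⟩
      have hr := r_pos hb0.le hbc θ
      rw [neg_mul]
      apply neg_nonpos.2
      positivity)
  simp only [sin_zero, sin_pi_div_two, one_pow, mul_one, sub_sub_cancel, ne_eq, OfNat.ofNat_ne_zero,
    not_false_eq_true, zero_pow, mul_zero, sub_zero, Real.sqrt_sq hc.le, Real.sqrt_sq ha.le] at this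
  rw [intervalIntegral.integral_symm, ← this]
  congr 1
  refine intervalIntegral.integral_congr_Ioo_of_le (by positivity) fun θ hθ => ?_
  have hcos := cos_pos_of_mem_Ioo ⟨by linarith [hθ.1, pi_pos], hθ.2⟩
  have hsin := sin_pos_of_mem_Ioo ⟨hθ.1, by linarith [hθ.2, pi_pos]⟩
  have hr := r_pos hb0.le hbc θ
  simp only [Function.comp]
  rw [Real.sq_sqrt (D_pos hb0.le hbc θ).le]
  have e : (c^2 - (c^2 - a^2) * sin θ ^ 2 - a^2) / (c^2 - (c^2 - (c^2 - a^2) * sin θ ^ 2))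
     = (cos θ / sin θ)^2 := by
    rw [div_pow, cos_sq', sub_sub_cancel]
    field_simp
    ring
  rw [e, Real.sqrt_sq (by positivity)]
  field_simp
  ring

/-- The reduced integral I(p,x). -/
noncomputable def II (c p x : ℝ) : ℝ := p * ((x - c^2) * KK c x + EE c x) -
        ((2*x*c^2 - 2*c^4) * KK c x + (2*c^2 - x) * EE c x)/3

lemma II_deriv {c ξ p' x' : ℝ} {p x : ℝ → ℝ} (hp : HasDerivAt p p' ξ) (hx : HasDerivAt x x' ξ)
    (h0 : 0 < x ξ) (h1 : x ξ < c^2) :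
    HasDerivAt (fun t => II c (p t) (x t))
      (p' * ((x ξ - c^2) * KK c (x ξ) + EE c (x ξ))
        + x' / 2 * ((p ξ - c^2) * KK c (x ξ) + EE c (x ξ))) ξ := by
  have e := (hasDeriv_E h0 h1).comp ξ hx
  have k := (hasDeriv_K h0 h1).comp ξ hx
  have := (hp.mul (((hx.sub_const (c^2)).mul k).add e)).sub
    ((((((hx.const_mul 2).mul_const (c^2)).sub_const (2*c^4)).mul k).add
      ((hx.const_sub (2*c^2)).mul e)).div_const 3)
  refine HasDerivAt.congr_deriv this ?_
  simp only [Function.comp, Pi.mul_apply, Pi.add_apply]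
  have : c^2 - x ξ ≠ 0 := by linarith
  field_simp
  ring

theorem phase_derivative_elliptic (c : ℝ) (hc : 0 < c) (a : ℝ → ℝ)
    (hrange : ∀ ξ ∈ Set.Ioo (-c ^ 2 / 2) (c ^ 2 / 3), 0 < a ξ ∧ a ξ < c)
    (hdiff : ∀ ξ ∈ Set.Ioo (-c ^ 2 / 2) (c ^ 2 / 3), DifferentiableAt ℝ a ξ)
    (hnorm : ∀ ξ ∈ Set.Ioo (-c ^ 2 / 2) (c ^ 2 / 3),
      ∫ s in (0:ℝ)..(a ξ),
        (ξ + (c ^ 2 - (a ξ) ^ 2) / 2 - s ^ 2) *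
          Real.sqrt (((a ξ) ^ 2 - s ^ 2) / (c ^ 2 - s ^ 2)) = 0) :
    ∀ ξ ∈ Set.Ioo (-c ^ 2 / 2) (c ^ 2 / 3),
      deriv (fun t => 24 * ∫ s in (a t)..c,
          (t + (c ^ 2 - (a t) ^ 2) / 2 - s ^ 2) *
            Real.sqrt ((s ^ 2 - (a t) ^ 2) / (c ^ 2 - s ^ 2))) ξ =
        12 * Real.pi * c /
          (∫ t in (0:ℝ)..1, (Real.sqrt ((1 - t ^ 2) * (1 - (a ξ / c) ^ 2 * t ^ 2)))⁻¹) := by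
  intro ξ hξ
  have hnhds : Set.Ioo (-c ^ 2 / 2) (c ^ 2 / 3) ∈ 𝓝 ξ := Ioo_mem_nhds hξ.1 hξ.2
  obtain ⟨ha, hac⟩ := hrange ξ hξ
  rw [sub3 ha hac]
  set x : ℝ → ℝ := fun t => a t ^ 2 with hxdef
  obtain ⟨x', hx'⟩ : ∃ x', HasDerivAt x x' ξ := ⟨_, ((hdiff ξ hξ).pow 2).hasDerivAt⟩
  have hp : HasDerivAt (fun t => t + (c^2 - x t)/2) (1 + (-x')/2) ξ :=
    (hasDerivAt_id ξ).add ((hx'.const_sub (c^2)).div_const 2)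
  have hr : HasDerivAt (fun t => c^2 - (t + (c^2 - x t)/2)) (-(1 + (-x')/2)) ξ := hp.const_sub _
  have hy : HasDerivAt (fun t => c^2 - x t) (-x') ξ := hx'.const_sub _
  have hx0 : 0 < x ξ := by simp only [hxdef]; positivity
  have hx1 : x ξ < c^2 := by simp only [hxdef]; nlinarith
  have d1 := II_deriv (c := c) hp hx' hx0 hx1
  have d2 := II_deriv (c := c) hr hy (by linarith) (by linarith)
  have z1 : (fun t => II c (t + (c^2 - x t)/2) (x t)) =ᶠ[𝓝 ξ] fun _ => 0 := by
    filter_upwards [hnhds] with t ht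
    obtain ⟨h0, h1⟩ := hrange t ht
    rw [← hnorm t ht, sub1 h0 h1, int_I (sq_nonneg _) (by nlinarith)]
    rfl
  have n1 := (d1.congr_of_eventuallyEq z1.symm).unique (hasDerivAt_const ξ (0:ℝ))
  have z2 : (fun t => 24 * ∫ s in (a t)..c,
          (t + (c ^ 2 - (a t) ^ 2) / 2 - s ^ 2) *
            Real.sqrt ((s ^ 2 - (a t) ^ 2) / (c ^ 2 - s ^ 2))) =ᶠ[𝓝 ξ]
      fun t => 24 * -II c (c^2 - (t + (c^2 - x t)/2)) (c^2 - x t) := by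
    filter_upwards [hnhds] with t ht
    obtain ⟨h0, h1⟩ := hrange t ht
    rw [sub2 h0 h1, int_I (by nlinarith) (by nlinarith)]
    rfl
  rw [((d2.neg.const_mul 24).congr_of_eventuallyEq z2).deriv]
  have hL := legendre hc hx0 hx1
  unfold WW at hL
  have hK := K_pos hc hx0.le hx1
  change _ = 12 * π * c / (c * KK c (x ξ))
  rw [eq_div_iff (by positivity)]
  have : 12 * π = 24 * (π/2) := by ring
  rw [this, ← hL]
  linear_combination (-24 * c * KK c (c^2 - x ξ)) * n1
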